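/- Let V be an n-dimensional vector space over the finite field 𝔽_q, let t ≥ 1 and n ≥ 2t, and let F be a cover-free family of (2t-1)-dimensional subspaces of V. Then |F| ≤ [n choose t]_q / [2t-1 choose t]_q. -/

import Mathlib

/-- A family of subspaces is cover-free if there are no three distinct members
`F₀, F₁, F₂` with `F₀ ≤ (F₀ ⊓ F₁) ⊔ (F₀ ⊓ F₂)`. -/
def IsCoverFree {K V : Type*} [Field K] [AddCommGroup V] [Module K V]
    (F : Set (Submodule K V)) : Prop :=
  ¬ ∃ F₀ F₁ F₂ : Submodule K V, F₀ ∈ F ∧ F₁ ∈ F ∧ F₂ ∈ F ∧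
    F₀ ≠ F₁ ∧ F₀ ≠ F₂ ∧ F₁ ≠ F₂ ∧ F₀ ≤ (F₀ ⊓ F₁) ⊔ (F₀ ⊓ F₂)

/-- The Gaussian binomial coefficient `[m choose k]_q` as a rational number. -/
def GaussQ (q m k : ℕ) : ℚ :=
  ∏ i ∈ Finset.range k, ((q : ℚ) ^ (m - i) - 1) / ((q : ℚ) ^ (k - i) - 1)

/-!
Let `A ∈ F` and let `T ≤ A` have dimension `t` and be contained in a further member of `F`. Since
`F` is cover-free, every complement `P` of `T` in `A` is contained in no member other than `A`: it
is an own subspace of `A`, of dimension `t - 1`. A `t`-dimensional subspace of `A` has as many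
complements in `A` as a `(t - 1)`-dimensional one, so at most as many `T` fail to be own as there
are own `P`. Hence each member has at least `[2t-1 choose t]` own subspaces of dimension `t` or
`t - 1`.

An own `P` lies in at least `q ^ t` subspaces of dimension `t` not inside its member, and these are
inside no member at all, while a `t`-dimensional space has at most `q ^ t` hyperplanes. So the own
subspaces of dimension `t - 1` are at most as numerous as the `t`-dimensional subspaces inside no
member, and these together with the own subspaces of dimension `t` number at most `[n choose t]`.
-/

open Module

section DoubleCounting

theorem ncard_nsmul_le_ncard_nsmul {α β R : Type*} [Finite α] [Finite β] [Semiring R]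
    [PartialOrder R] [IsOrderedRing R] (r : α → β → Prop) {s : Set α} {t : Set β} {m n : R}
    (hm : ∀ a ∈ s, m ≤ {b ∈ t | r a b}.ncard) (hn : ∀ b ∈ t, {a ∈ s | r a b}.ncard ≤ n) :
    s.ncard • m ≤ t.ncard • n := by
  classical
  have := Fintype.ofFinite α
  have := Fintype.ofFinite β
  rw [Set.ncard_eq_toFinset_card' s, Set.ncard_eq_toFinset_card' t]
  refine Finset.card_nsmul_le_card_nsmul r (fun a ha ↦ ?_) (fun b hb ↦ ?_)
  · simpa [← Set.ncard_coe_finset] using hm a (by simpa using ha)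
  · simpa [← Set.ncard_coe_finset] using hn b (by simpa using hb)

theorem ncard_le_ncard_of_forall_ncard_rel {α β : Type*} [Finite α] [Finite β] (r : α → β → Prop)
    {s : Set α} {t : Set β} {m : ℕ} (hm0 : 0 < m) (hm : ∀ a ∈ s, m ≤ {b ∈ t | r a b}.ncard)
    (hn : ∀ b ∈ t, {a ∈ s | r a b}.ncard ≤ m) : s.ncard ≤ t.ncard :=
  Nat.le_of_mul_le_mul_right (ncard_nsmul_le_ncard_nsmul r hm hn) hm0

end DoubleCounting

section GaussQ

variable {q m k : ℕ}

theorem gaussQ_eq_prod_pow_sub_pow (hq : q ≠ 0) (hk : k ≤ m) :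
    GaussQ q m k = ∏ i : Fin k, ((q : ℚ) ^ m - q ^ (i : ℕ)) / (q ^ k - q ^ (i : ℕ)) := by
  rw [GaussQ, Fin.prod_univ_eq_prod_range (fun i ↦ ((q : ℚ) ^ m - q ^ i) / (q ^ k - q ^ i))]
  refine Finset.prod_congr rfl fun i hi ↦ ?_
  have hik : i ≤ k := (Finset.mem_range.1 hi).le
  have factor {j : ℕ} (hij : i ≤ j) : (q : ℚ) ^ j - q ^ i = q ^ i * (q ^ (j - i) - 1) := by
    rw [mul_sub, mul_one, ← pow_add, Nat.add_sub_cancel' hij]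
  rw [factor hik, factor (hik.trans hk), mul_div_mul_left _ _ (by positivity)]

theorem gaussQ_pos (hq : 1 < q) (hk : k ≤ m) : 0 < GaussQ q m k := by
  refine Finset.prod_pos fun i hi ↦ ?_
  have hik := Finset.mem_range.1 hi
  have pow_sub_one_pos {j : ℕ} (hij : i < j) : (0 : ℚ) < q ^ (j - i) - 1 :=
    sub_pos.2 (one_lt_pow₀ (by exact_mod_cast hq) (Nat.sub_ne_zero_of_lt hij))
  exact div_pos (pow_sub_one_pos (hik.trans_le hk)) (pow_sub_one_pos hik)

end GaussQ

section SubmodulesOfSubmodule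

variable {R M : Type*} [Ring R] [AddCommGroup M] [Module R M]

theorem image_map_subtype_setOf_finrank_eq (A : Submodule R M) (k : ℕ) :
    Submodule.map A.subtype '' {W | finrank R W = k} = {W | W ≤ A ∧ finrank R W = k} := by
  ext W
  constructor
  · rintro ⟨W, rfl, rfl⟩
    exact ⟨Submodule.map_subtype_le A W, Submodule.finrank_map_subtype_eq A W⟩
  · rintro ⟨hWA, rfl⟩
    have hW : (W.comap A.subtype).map A.subtype = W := by simpa using hWA
    exact ⟨_, by rw [Set.mem_ofPred, ← Submodule.finrank_map_subtype_eq, hW], hW⟩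

theorem ncard_setOf_le_finrank_eq (A : Submodule R M) (k : ℕ) :
    {W | W ≤ A ∧ finrank R W = k}.ncard = {W : Submodule R A | finrank R W = k}.ncard := by
  rw [← image_map_subtype_setOf_finrank_eq, Set.ncard_image_of_injective _
    (Submodule.map_injective_of_injective A.subtype_injective)]

theorem image_map_subtype_setOf_isCompl {A : Submodule R M} (T : Submodule R A) :
    Submodule.map A.subtype '' {P | IsCompl T P} =
      {P | Disjoint (T.map A.subtype) P ∧ T.map A.subtype ⊔ P = A} := by
  have isCompl_iff (P : Submodule R A) : IsCompl T P ↔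
      Disjoint (T.map A.subtype) (P.map A.subtype) ∧ T.map A.subtype ⊔ P.map A.subtype = A :=
    A.mapIic.isCompl_iff.trans Set.Iic.isCompl_iff
  ext P
  constructor
  · rintro ⟨P, hP, rfl⟩
    exact (isCompl_iff P).1 hP
  · intro hP
    have hPA : (P.comap A.subtype).map A.subtype = P := by simpa using le_sup_right.trans hP.2.le
    exact ⟨_, (isCompl_iff _).2 (by rwa [hPA]), hPA⟩

/-- Retractions of `M` onto `P` correspond to linear maps from a complement `Q` of `P` to `P`; as
retractions also correspond to complements of `P`, this counts the complements. -/
noncomputable def retractionEquivOfIsCompl {P Q : Submodule R M} (hPQ : IsCompl P Q) :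
    {f : M →ₗ[R] P // ∀ x : P, f x = x} ≃ (Q →ₗ[R] P) where
  toFun f := f.1.domRestrict Q
  invFun g := ⟨LinearMap.ofIsCompl hPQ LinearMap.id g, fun x ↦ by simp⟩
  left_inv f := Subtype.ext <| LinearMap.ofIsCompl_eq hPQ (fun x ↦ by simp [f.2 x]) (by simp)
  right_inv g := by ext x; simp

end SubmodulesOfSubmodule

section DivisionRing

variable {K V : Type*} [DivisionRing K] [AddCommGroup V] [Module K V]

theorem finrank_add_finrank_of_disjoint_of_sup_eq [FiniteDimensional K V] {P Q A : Submodule K V}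
    (hd : Disjoint P Q) (hs : P ⊔ Q = A) : finrank K P + finrank K Q = finrank K A := by
  rw [← Submodule.finrank_sup_add_finrank_inf_eq, hs, hd.eq_bot, finrank_bot, add_zero]

theorem span_range_eq_of_finrank_eq [FiniteDimensional K V] {k : ℕ} {W : Submodule K V}
    (hW : finrank K W = k) {s : Fin k → V} (hs : LinearIndependent K s) (hsW : ∀ i, s i ∈ W) :
    Submodule.span K (Set.range s) = W :=
  Submodule.eq_of_le_of_finrank_eq (Submodule.span_le.2 (Set.range_subset_iff.2 hsW)) <| by
    rw [finrank_span_eq_card hs, Fintype.card_fin, hW]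

theorem bijective_sigma_linearIndependent_coe [FiniteDimensional K V] (k : ℕ) :
    Function.Bijective fun x : Σ W : {W : Submodule K V // finrank K W = k},
        {s : Fin k → W.1 // LinearIndependent K s} ↦
      (⟨fun i ↦ x.2.1 i, x.2.2.map' x.1.1.subtype (Submodule.ker_subtype _)⟩ :
        {s : Fin k → V // LinearIndependent K s}) := by
  constructor
  · rintro ⟨⟨W, hW⟩, s, hs⟩ ⟨⟨W', hW'⟩, s', hs'⟩ h
    have hcoe : (fun i ↦ (s i : V)) = fun i ↦ (s' i : V) := congrArg Subtype.val h
    have span_coe {W : Submodule K V} (hW : finrank K W = k) {s : Fin k → W}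
        (hs : LinearIndependent K s) : Submodule.span K (Set.range fun i ↦ (s i : V)) = W :=
      span_range_eq_of_finrank_eq hW (hs.map' W.subtype (Submodule.ker_subtype _))
        fun i ↦ (s i).2
    obtain rfl : W = W' := by rw [← span_coe hW hs, hcoe, span_coe hW' hs']
    obtain rfl : s = s' := funext fun i ↦ Subtype.ext (congrFun hcoe i)
    rfl
  · rintro ⟨s, hs⟩
    have hfin : finrank K (Submodule.span K (Set.range s)) = k := by
      rw [finrank_span_eq_card hs, Fintype.card_fin]
    exact ⟨⟨⟨_, hfin⟩, _, linearIndependent_span hs⟩, rfl⟩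

theorem injOn_sup_span_add {P A C : Submodule K V} {x : V} (hPA : P ≤ A) (hCA : C ≤ A)
    (hPC : Disjoint P C) (hx : x ∉ A) :
    Set.InjOn (fun c ↦ P ⊔ Submodule.span K {x + c}) C := by
  intro c hc c' hc' h
  have hmem : x + c' ∈ P ⊔ Submodule.span K {x + c} := by
    rw [show P ⊔ Submodule.span K {x + c} = P ⊔ Submodule.span K {x + c'} from h]
    exact Submodule.mem_sup_right (Submodule.mem_span_singleton_self _)
  obtain ⟨p, hp, y, hy, hsum⟩ := Submodule.mem_sup.1 hmem
  obtain ⟨a, rfl⟩ := Submodule.mem_span_singleton.1 hy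
  have ha : 1 - a = 0 := by
    by_contra ha
    have hxA : (1 - a) • x ∈ A := by
      rw [show (1 - a) • x = p + a • c - c' by grind [smul_add, sub_smul, one_smul]]
      exact A.sub_mem (A.add_mem (hPA hp) (A.smul_mem a (hCA hc))) (hCA hc')
    exact hx ((A.smul_mem_iff ha).1 hxA)
  obtain rfl : a = 1 := (sub_eq_zero.1 ha).symm
  have hpC : p = c' - c := by grind [one_smul]
  exact (sub_eq_zero.1 (hpC ▸ Submodule.disjoint_def.1 hPC p hp (hpC ▸ C.sub_mem hc' hc))).symm

end DivisionRing

section CountingSubspaces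

variable {K V : Type*} [Field K] [AddCommGroup V] [Module K V]

theorem ncard_setOf_isCompl [Finite K] [FiniteDimensional K V] (P : Submodule K V) :
    {Q | IsCompl P Q}.ncard = Nat.card K ^ ((finrank K V - finrank K P) * finrank K P) := by
  obtain ⟨Q, hPQ⟩ := P.exists_isCompl
  rw [← Nat.card_coe_set_eq, Set.coe_ofPred,
    Nat.card_congr (P.isComplEquivProj.trans (retractionEquivOfIsCompl hPQ)),
    natCard_eq_pow_finrank (K := K), finrank_linearMap,
    ← Submodule.finrank_add_eq_of_isCompl hPQ, Nat.add_sub_cancel_left]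

theorem ncard_setOf_disjoint_sup_eq [Finite K] [FiniteDimensional K V] {T A : Submodule K V}
    (hTA : T ≤ A) : {P | Disjoint T P ∧ T ⊔ P = A}.ncard =
      Nat.card K ^ ((finrank K A - finrank K T) * finrank K T) := by
  have hT : (T.comap A.subtype).map A.subtype = T := by simpa using hTA
  have hfin : finrank K (T.comap A.subtype) = finrank K T := by
    rw [← Submodule.finrank_map_subtype_eq, hT]
  have himage := image_map_subtype_setOf_isCompl (T.comap A.subtype)
  rw [hT] at himage
  rw [← himage, Set.ncard_image_of_injective _
    (Submodule.map_injective_of_injective A.subtype_injective), ncard_setOf_isCompl, hfin]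

theorem natCard_linearIndependent [Finite K] [FiniteDimensional K V] {k : ℕ}
    (hk : k ≤ finrank K V) : (Nat.card {s : Fin k → V // LinearIndependent K s} : ℚ) =
      ∏ i : Fin k, ((Nat.card K : ℚ) ^ finrank K V - Nat.card K ^ (i : ℕ)) := by
  have := Fintype.ofFinite K
  have : Finite V := Module.finite_of_finite K
  rw [card_linearIndependent hk, Nat.cast_prod, Nat.card_eq_fintype_card]
  refine Finset.prod_congr rfl fun i _ ↦ ?_
  rw [Nat.cast_sub (Nat.pow_le_pow_right Fintype.card_pos (i.2.le.trans hk)), Nat.cast_pow,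
    Nat.cast_pow]

theorem natCard_linearIndependent_eq_ncard_mul [Finite K] [FiniteDimensional K V] (k : ℕ) :
    (Nat.card {s : Fin k → V // LinearIndependent K s} : ℚ) =
      {W : Submodule K V | finrank K W = k}.ncard *
        ∏ i : Fin k, ((Nat.card K : ℚ) ^ k - Nat.card K ^ (i : ℕ)) := by
  have : Finite V := Module.finite_of_finite K
  have := Fintype.ofFinite {W : Submodule K V // finrank K W = k}
  have card_bases (W : {W : Submodule K V // finrank K W = k}) :
      (Nat.card {s : Fin k → W.1 // LinearIndependent K s} : ℚ) =
        ∏ i : Fin k, ((Nat.card K : ℚ) ^ k - Nat.card K ^ (i : ℕ)) := by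
    rw [natCard_linearIndependent W.2.ge, W.2]
  rw [← Nat.card_eq_of_bijective _ (bijective_sigma_linearIndependent_coe k), Nat.card_sigma,
    Nat.cast_sum, Finset.sum_congr rfl fun W _ ↦ card_bases W, Finset.sum_const, nsmul_eq_mul,
    Finset.card_univ, ← Nat.card_eq_fintype_card, ← Nat.card_coe_set_eq]
  rfl

theorem ncard_setOf_finrank_eq [Finite K] [FiniteDimensional K V] {k : ℕ}
    (hk : k ≤ finrank K V) :
    ({W : Submodule K V | finrank K W = k}.ncard : ℚ) = GaussQ (Nat.card K) (finrank K V) k := by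
  have hq : 1 < Nat.card K := Finite.one_lt_card
  have hprod : ∏ i : Fin k, ((Nat.card K : ℚ) ^ k - Nat.card K ^ (i : ℕ)) ≠ 0 :=
    Finset.prod_ne_zero_iff.2 fun i _ ↦
      (sub_pos.2 (pow_lt_pow_right₀ (by exact_mod_cast hq) i.2)).ne'
  rw [gaussQ_eq_prod_pow_sub_pow (by lia) hk, Finset.prod_div_distrib, eq_div_iff hprod,
    ← natCard_linearIndependent_eq_ncard_mul, natCard_linearIndependent hk]

theorem ncard_setOf_finrank_add_one_eq_le [Finite K] [FiniteDimensional K V] :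
    {H : Submodule K V | finrank K H + 1 = finrank K V}.ncard ≤ Nat.card K ^ finrank K V := by
  have : Finite (Dual K V) := Module.finite_of_finite K
  have hker : {H : Submodule K V | finrank K H + 1 = finrank K V} ⊆
      Set.range (LinearMap.ker : Dual K V → Submodule K V) := by
    intro H hH
    have hlt : H < ⊤ := lt_top_iff_ne_top.2 <| by
      rintro rfl
      simp at hH
    obtain ⟨f, hf, hle⟩ := H.exists_le_ker_of_lt_top hlt
    have hfin := Module.Dual.finrank_ker_add_one_of_ne_zero hf
    have hfin_eq := Nat.add_right_cancel (hH.trans hfin.symm)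
    exact ⟨f, (Submodule.eq_of_le_of_finrank_eq hle hfin_eq).symm⟩
  calc _ ≤ (Set.range (LinearMap.ker : Dual K V → Submodule K V)).ncard :=
        Set.ncard_le_ncard hker (Set.finite_range _)
    _ ≤ Nat.card (Dual K V) := by
        rw [← Nat.card_coe_set_eq]
        exact Finite.card_range_le _
    _ = _ := by rw [natCard_eq_pow_finrank (K := K), Subspace.dual_finrank_eq]

theorem pow_le_ncard_setOf_finrank_eq_add_one_not_le [Finite K] [FiniteDimensional K V]
    {P A : Submodule K V} (hPA : P ≤ A) (hA : A ≠ ⊤) :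
    Nat.card K ^ (finrank K A - finrank K P) ≤
      {W | P ≤ W ∧ finrank K W = finrank K P + 1 ∧ ¬ W ≤ A}.ncard := by
  have : Finite V := Module.finite_of_finite K
  obtain ⟨x, -, hx⟩ := SetLike.exists_of_lt (lt_top_iff_ne_top.2 hA)
  obtain ⟨C, hPC, hsup⟩ := IsModularLattice.exists_disjoint_and_sup_eq hPA
  have hCA : C ≤ A := le_sup_right.trans hsup.le
  have hxc {c : V} (hc : c ∈ C) : x + c ∉ A := fun h ↦ hx ((A.add_mem_iff_left (hCA hc)).1 h)
  have hfin := finrank_add_finrank_of_disjoint_of_sup_eq hPC hsup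
  calc Nat.card K ^ (finrank K A - finrank K P)
      = (C : Set V).ncard := by
        rw [← hfin, Nat.add_sub_cancel_left, ← natCard_eq_pow_finrank (V := C)]
        rfl
    _ = ((fun c ↦ P ⊔ Submodule.span K {x + c}) '' C).ncard :=
        (injOn_sup_span_add hPA hCA hPC hx).ncard_image.symm
    _ ≤ _ := Set.ncard_le_ncard <| by
        rintro _ ⟨c, hc, rfl⟩
        refine ⟨le_sup_left, Submodule.finrank_sup_span_singleton fun h ↦ hxc hc (hPA h),
          fun h ↦ hxc hc ?_⟩
        exact h (Submodule.mem_sup_right (Submodule.mem_span_singleton_self _))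

end CountingSubspaces

section CoverFree

variable {K V : Type*} [Field K] [AddCommGroup V] [Module K V] {F : Set (Submodule K V)}
  {A : Submodule K V} {k l : ℕ}

/-- The `k`-dimensional own subspaces of the members of `F`: those contained in exactly one
member. -/
def ownSubspaces (F : Set (Submodule K V)) (k : ℕ) : Set (Submodule K V) :=
  {W | finrank K W = k ∧ ∃! A, A ∈ F ∧ W ≤ A}

/-- The `k`-dimensional subspaces contained in no member of `F`. -/
def uncoveredSubspaces (F : Set (Submodule K V)) (k : ℕ) : Set (Submodule K V) :=
  {W | finrank K W = k ∧ ∀ A ∈ F, ¬ W ≤ A}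

theorem mem_ownSubspaces_iff_of_le (hA : A ∈ F) {W : Submodule K V} (hWA : W ≤ A) :
    W ∈ ownSubspaces F k ↔ finrank K W = k ∧ ∀ B ∈ F, W ≤ B → B = A := by
  refine and_congr_right fun _ ↦ ⟨fun h B hB hWB ↦ h.unique ⟨hB, hWB⟩ ⟨hA, hWA⟩, fun h ↦ ?_⟩
  exact ⟨A, ⟨hA, hWA⟩, fun B hB ↦ h B hB.1 hB.2⟩

theorem IsCoverFree.eq_of_le_of_sup_eq (hF : IsCoverFree F) (hanti : IsAntichain (· ≤ ·) F)
    {B C T P : Submodule K V} (hA : A ∈ F) (hB : B ∈ F) (hC : C ∈ F) (hBA : B ≠ A)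
    (hTB : T ≤ B) (hPC : P ≤ C) (hTP : T ⊔ P = A) : C = A := by
  by_contra hCA
  have hTA : T ≤ A := le_sup_left.trans hTP.le
  have hPA : P ≤ A := le_sup_right.trans hTP.le
  obtain rfl | hBC := eq_or_ne B C
  · exact hBA (hanti.eq hA hB (hTP ▸ sup_le hTB hPC)).symm
  · refine hF ⟨A, B, C, hA, hB, hC, hBA.symm, Ne.symm hCA, hBC, ?_⟩
    exact hTP.symm.le.trans (sup_le_sup (le_inf hTA hTB) (le_inf hPA hPC))

theorem IsCoverFree.mem_ownSubspaces_of_disjoint_of_sup_eq [FiniteDimensional K V]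
    (hF : IsCoverFree F) (hanti : IsAntichain (· ≤ ·) F) (hA : A ∈ F) {T P : Submodule K V}
    (hT : T ∉ ownSubspaces F k) (hTk : finrank K T = k) (hdisj : Disjoint T P) (hsup : T ⊔ P = A) :
    P ∈ ownSubspaces F (finrank K A - k) := by
  have hTA : T ≤ A := le_sup_left.trans hsup.le
  have hPA : P ≤ A := le_sup_right.trans hsup.le
  obtain ⟨B, hB, hTB, hBA⟩ : ∃ B ∈ F, T ≤ B ∧ B ≠ A := by
    simpa [mem_ownSubspaces_iff_of_le hA hTA, hTk] using hT
  have hfin := finrank_add_finrank_of_disjoint_of_sup_eq hdisj hsup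
  exact (mem_ownSubspaces_iff_of_le hA hPA).2
    ⟨by lia, fun C hC hPC ↦ hF.eq_of_le_of_sup_eq hanti hA hB hC hBA hTB hPC hsup⟩

variable [Finite K] [FiniteDimensional K V]

theorem IsCoverFree.ncard_notMem_ownSubspaces_le (hF : IsCoverFree F)
    (hanti : IsAntichain (· ≤ ·) F) (hA : A ∈ F) (hkl : k + l = finrank K A) :
    {T | (T ≤ A ∧ finrank K T = k) ∧ T ∉ ownSubspaces F k}.ncard ≤
      {P ∈ ownSubspaces F l | P ≤ A}.ncard := by
  have : Finite V := Module.finite_of_finite K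
  obtain rfl : l = finrank K A - k := by lia
  refine ncard_le_ncard_of_forall_ncard_rel (fun T P ↦ Disjoint T P ∧ T ⊔ P = A)
    (m := Nat.card K ^ ((finrank K A - k) * k)) (pow_pos Nat.card_pos _) ?_ ?_
  · rintro T ⟨⟨hTA, rfl⟩, hT⟩
    rw [← ncard_setOf_disjoint_sup_eq hTA]
    refine Set.ncard_le_ncard fun P hP ↦ ⟨⟨?_, le_sup_right.trans hP.2.le⟩, hP⟩
    exact hF.mem_ownSubspaces_of_disjoint_of_sup_eq hanti hA hT rfl hP.1 hP.2
  · rintro P ⟨⟨hPl, -⟩, hPA⟩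
    have hcompl : {T | Disjoint P T ∧ P ⊔ T = A}.ncard = Nat.card K ^ ((finrank K A - k) * k) := by
      rw [ncard_setOf_disjoint_sup_eq hPA, hPl, Nat.sub_sub_self (by lia), mul_comm]
    rw [← hcompl]
    exact Set.ncard_le_ncard fun T hT ↦ ⟨hT.2.1.symm, sup_comm P T ▸ hT.2.2⟩

theorem IsCoverFree.gaussQ_le_ncard_ownSubspaces (hF : IsCoverFree F)
    (hanti : IsAntichain (· ≤ ·) F) (hA : A ∈ F) (hkl : k + l = finrank K A) (hne : k ≠ l) :
    GaussQ (Nat.card K) (finrank K A) k ≤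
      {W ∈ ownSubspaces F k ∪ ownSubspaces F l | W ≤ A}.ncard := by
  have : Finite V := Module.finite_of_finite K
  have hdisj : Disjoint {W ∈ ownSubspaces F k | W ≤ A} {W ∈ ownSubspaces F l | W ≤ A} :=
    Set.disjoint_left.2 fun W hk hl ↦ hne (hk.1.1.symm.trans hl.1.1)
  rw [← ncard_setOf_finrank_eq (by lia), ← ncard_setOf_le_finrank_eq, Nat.cast_le]
  calc {W | W ≤ A ∧ finrank K W = k}.ncard
      ≤ ({W ∈ ownSubspaces F k | W ≤ A} ∪
          {W | (W ≤ A ∧ finrank K W = k) ∧ W ∉ ownSubspaces F k}).ncard :=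
        Set.ncard_le_ncard fun W hW ↦ by
          by_cases hown : W ∈ ownSubspaces F k
          exacts [Or.inl ⟨hown, hW.1⟩, Or.inr ⟨hW, hown⟩]
    _ ≤ _ := Set.ncard_union_le _ _
    _ ≤ {W ∈ ownSubspaces F k | W ≤ A}.ncard + {W ∈ ownSubspaces F l | W ≤ A}.ncard :=
        Nat.add_le_add_left (hF.ncard_notMem_ownSubspaces_le hanti hA hkl) _
    _ = _ := by
        rw [← Set.ncard_union_eq hdisj]
        congr 1
        ext W
        exact or_and_right.symm

theorem IsCoverFree.ncard_mul_gaussQ_le (hF : IsCoverFree F)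
    (hanti : IsAntichain (· ≤ ·) F) (hdim : ∀ A ∈ F, finrank K A = k + l) (hne : k ≠ l) :
    F.ncard * GaussQ (Nat.card K) (k + l) k ≤ (ownSubspaces F k ∪ ownSubspaces F l).ncard := by
  have : Finite V := Module.finite_of_finite K
  rw [← nsmul_eq_mul, ← nsmul_one (Set.ncard _)]
  refine ncard_nsmul_le_ncard_nsmul (fun A W ↦ W ≤ A) (fun A hA ↦ ?_) (fun W hW ↦ ?_)
  · rw [← hdim A hA]
    exact hF.gaussQ_le_ncard_ownSubspaces hanti hA (hdim A hA).symm hne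
  · have hunique : ∃! A, A ∈ F ∧ W ≤ A := hW.elim And.right And.right
    exact_mod_cast (Set.ncard_le_one (Set.toFinite _)).2 fun A hA B hB ↦ hunique.unique hA hB

theorem ncard_ownSubspaces_le_ncard_uncoveredSubspaces
    (hdim : ∀ A ∈ F, 2 * k + 1 ≤ finrank K A) (htop : ⊤ ∉ F) :
    (ownSubspaces F k).ncard ≤ (uncoveredSubspaces F (k + 1)).ncard := by
  have : Finite V := Module.finite_of_finite K
  refine ncard_le_ncard_of_forall_ncard_rel (· ≤ ·) (m := Nat.card K ^ (k + 1))
    (pow_pos Nat.card_pos _) ?_ ?_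
  · rintro P ⟨hPk, A, ⟨hA, hPA⟩, hunique⟩
    calc Nat.card K ^ (k + 1)
        ≤ Nat.card K ^ (finrank K A - finrank K P) :=
          Nat.pow_le_pow_right Nat.card_pos (by grind)
      _ ≤ _ := pow_le_ncard_setOf_finrank_eq_add_one_not_le hPA (ne_of_mem_of_not_mem hA htop)
      _ ≤ {W ∈ uncoveredSubspaces F (k + 1) | P ≤ W}.ncard :=
          Set.ncard_le_ncard fun W ⟨hPW, hWk, hWA⟩ ↦
            ⟨⟨hPk ▸ hWk, fun B hB hWB ↦ hWA (hunique B ⟨hB, hPW.trans hWB⟩ ▸ hWB)⟩, hPW⟩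
  · rintro W ⟨hWk, -⟩
    calc {P ∈ ownSubspaces F k | P ≤ W}.ncard
        ≤ {P | P ≤ W ∧ finrank K P = k}.ncard :=
          Set.ncard_le_ncard fun P ⟨hP, hPW⟩ ↦ ⟨hPW, hP.1⟩
      _ = {H : Submodule K W | finrank K H + 1 = finrank K W}.ncard := by
          rw [ncard_setOf_le_finrank_eq]
          simp only [hWk, Nat.add_right_cancel_iff]
      _ ≤ Nat.card K ^ (k + 1) := hWk ▸ ncard_setOf_finrank_add_one_eq_le

theorem ncard_ownSubspaces_add_ncard_uncoveredSubspaces_le (F : Set (Submodule K V)) (k : ℕ) :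
    (ownSubspaces F k).ncard + (uncoveredSubspaces F k).ncard ≤
      {W : Submodule K V | finrank K W = k}.ncard := by
  have : Finite V := Module.finite_of_finite K
  have hdisj : Disjoint (ownSubspaces F k) (uncoveredSubspaces F k) :=
    Set.disjoint_left.2 fun W ⟨_, A, ⟨hA, hWA⟩, _⟩ hW ↦ hW.2 A hA hWA
  rw [← Set.ncard_union_eq hdisj]
  exact Set.ncard_le_ncard (Set.union_subset (fun _ hW ↦ hW.1) fun _ hW ↦ hW.1)

end CoverFree

theorem stmt2 (q n t : ℕ) (K : Type*) [Field K] [Fintype K] (hK : Fintype.card K = q)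
    (V : Type*) [AddCommGroup V] [Module K V] [FiniteDimensional K V]
    (hV : Module.finrank K V = n) (ht : 1 ≤ t) (hn : 2 * t ≤ n)
    (F : Set (Submodule K V)) (hdim : ∀ A ∈ F, Module.finrank K A = 2 * t - 1)
    (hcf : IsCoverFree F) :
    (F.ncard : ℚ) ≤ GaussQ q n t / GaussQ q (2 * t - 1) t := by
  obtain ⟨k, rfl⟩ : ∃ k, t = k + 1 := ⟨t - 1, by lia⟩
  obtain rfl : Nat.card K = q := Nat.card_eq_fintype_card.trans hK
  rw [show 2 * (k + 1) - 1 = k + 1 + k by lia] at hdim ⊢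
  have hanti : IsAntichain (· ≤ ·) F := fun A hA B hB hne hle ↦
    hne (Submodule.eq_of_le_of_finrank_eq hle ((hdim A hA).trans (hdim B hB).symm))
  have htop : ⊤ ∉ F := fun h ↦ by
    have := hdim ⊤ h
    rw [finrank_top] at this
    lia
  rw [le_div_iff₀ (gaussQ_pos Finite.one_lt_card (by lia)), ← hV,
    ← ncard_setOf_finrank_eq (by lia)]
  calc F.ncard * GaussQ (Nat.card K) (k + 1 + k) (k + 1)
      ≤ (ownSubspaces F (k + 1) ∪ ownSubspaces F k).ncard :=
        hcf.ncard_mul_gaussQ_le hanti hdim (by lia)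
    _ ≤ {W : Submodule K V | finrank K W = k + 1}.ncard := by
        have hunion := Set.ncard_union_le (ownSubspaces F (k + 1)) (ownSubspaces F k)
        have huncovered := ncard_ownSubspaces_le_ncard_uncoveredSubspaces
          (fun A hA ↦ (by lia : 2 * k + 1 ≤ k + 1 + k).trans (hdim A hA).ge) htop
        have htotal := ncard_ownSubspaces_add_ncard_uncoveredSubspaces_le F (k + 1)
        exact_mod_cast (by lia)
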